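/- Let f = {V R Vᵀ : R ∈ S^r₊} be the minimal face of Sⁿ₊ containing the nonempty spectrahedron F = {X ⪰ 0 : A(X) = b}, where V has orthonormal columns and range(V) = range(X̂) for some X̂ in the relative interior of F. Let W ∈ Sⁿ. Then X* ∈ Sⁿ is the (unique) optimal solution of the best approximation problem min{½‖X − W‖² : A(X) = b, X ⪰ 0} if and only if there exists ŷ ∈ ℝᵐ such that A(P_f(W + A*(ŷ))) = b and X* = P_f(W + A*(ŷ)). -/

import Mathlib

/-!
On `F` the quadratic `‖X - W‖²` has minimiser `X*` exactly when `⟨X* - W, Y - X*⟩ ≥ 0` for all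
`Y ∈ F`. Such a `Y` also satisfies `⟨A* y, Y - X*⟩ = 0`, so any nearest point of `f ⊇ F` to
`W + A* y` that lies in `F` is the minimiser; this is the easy implication.

The converse needs a multiplier `y` with `⟨X* - W - A* y, Y - X*⟩ ≥ 0` for all `Y` in the face `f`,
and it exists because Slater's condition holds relative to `f`. Indeed the matrices `Y ⪰ 0`
dominated by some multiple `t X`, `X ∈ F`, form a face containing `F`, hence containing `f` and in
particular `V Vᵀ`. So some `X = V R Vᵀ ∈ F` has `t R ⪰ I` (`exists_slater`).
In the variable `R`, the linear form `⟨X* - W, V · Vᵀ⟩` is nonnegative on the feasible directions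
in the kernel of the constraints. The Slater point says that this kernel and the cone of
feasible directions sum to the whole space, so M. Riesz' extension theorem yields a form `g`
that is nonnegative on the whole cone and agrees with the given one on the kernel; the difference
of the two is a combination of the constraints, whose coefficients are the multiplier
(`exists_multiplier`).
-/

open Matrix Set

noncomputable section

/-- Squared Frobenius norm via the trace inner product. -/
def frobSq {k : ℕ} (M : Matrix (Fin k) (Fin k) ℝ) : ℝ := (Mᵀ * M).trace

/-- `P` is a nearest point to `X` in `C` (Frobenius norm). -/
def IsProjOn {k : ℕ} (C : Set (Matrix (Fin k) (Fin k) ℝ))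
    (X P : Matrix (Fin k) (Fin k) ℝ) : Prop :=
  P ∈ C ∧ ∀ Y ∈ C, frobSq (X - P) ≤ frobSq (X - Y)

/-- The linear map `A X = (⟨Aᵢ, X⟩)ᵢ` (trace inner product). -/
def calA {n m : ℕ} (A : Fin m → Matrix (Fin n) (Fin n) ℝ)
    (X : Matrix (Fin n) (Fin n) ℝ) : Fin m → ℝ := fun i => (A i * X).trace

/-- The adjoint map `A* λ = ∑ᵢ λᵢ Aᵢ`. -/
def adjA {n m : ℕ} (A : Fin m → Matrix (Fin n) (Fin n) ℝ) (lam : Fin m → ℝ) :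
    Matrix (Fin n) (Fin n) ℝ := ∑ i, lam i • A i

/-- The spectrahedron `F = {X ⪰ 0 : A X = b}`. -/
def spectra {n m : ℕ} (A : Fin m → Matrix (Fin n) (Fin n) ℝ) (b : Fin m → ℝ) :
    Set (Matrix (Fin n) (Fin n) ℝ) := {X | X.PosSemidef ∧ calA A X = b}

/-- `f` is a face of the convex cone `K`: `f` is a convex cone contained in `K` and whenever
a sum of two elements of `K` lies in `f`, both summands lie in `f`. -/
def IsFaceOfCone {k : ℕ} (f K : Set (Matrix (Fin k) (Fin k) ℝ)) : Prop :=
  f ⊆ K ∧ Convex ℝ f ∧ (∀ c : ℝ, 0 ≤ c → ∀ x ∈ f, c • x ∈ f) ∧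
    ∀ x ∈ K, ∀ y ∈ K, x + y ∈ f → x ∈ f ∧ y ∈ f

/-- `f` is the minimal face of the cone `K` containing the set `C`. -/
def IsMinFace {k : ℕ} (f K C : Set (Matrix (Fin k) (Fin k) ℝ)) : Prop :=
  IsFaceOfCone f K ∧ C ⊆ f ∧ ∀ g, IsFaceOfCone g K → C ⊆ g → f ⊆ g

/-! ### Trace inner product -/

lemma frobSq_nonneg {k : ℕ} (M : Matrix (Fin k) (Fin k) ℝ) : 0 ≤ frobSq M := by
  have h := (posSemidef_conjTranspose_mul_self M).trace_nonneg
  rwa [conjTranspose_eq_transpose_of_trivial] at h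

lemma frobSq_add {k : ℕ} (B D : Matrix (Fin k) (Fin k) ℝ) :
    frobSq (B + D) = frobSq B + 2 * (Bᵀ * D).trace + frobSq D := by
  have h : (Dᵀ * B).trace = (Bᵀ * D).trace := by
    rw [← trace_transpose, transpose_mul, transpose_transpose]
  simp only [frobSq, transpose_add, add_mul, mul_add, trace_add, h]
  ring

lemma frobSq_sub_comm {k : ℕ} (B D : Matrix (Fin k) (Fin k) ℝ) :
    frobSq (B - D) = frobSq (D - B) := by
  rw [← neg_sub D B, frobSq, frobSq, transpose_neg, neg_mul_neg]

lemma frobSq_smul {k : ℕ} (c : ℝ) (D : Matrix (Fin k) (Fin k) ℝ) :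
    frobSq (c • D) = c ^ 2 * frobSq D := by
  simp only [frobSq, transpose_smul, smul_mul_assoc, mul_smul_comm, trace_smul, smul_eq_mul]
  ring

lemma calA_add {n m : ℕ} (A : Fin m → Matrix (Fin n) (Fin n) ℝ) (X Y : Matrix (Fin n) (Fin n) ℝ) :
    calA A (X + Y) = calA A X + calA A Y := by
  ext i; simp [calA, mul_add]

lemma calA_smul {n m : ℕ} (A : Fin m → Matrix (Fin n) (Fin n) ℝ) (c : ℝ)
    (X : Matrix (Fin n) (Fin n) ℝ) : calA A (c • X) = c • calA A X := by
  ext i; simp [calA]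

lemma trace_adjA_mul {n m : ℕ} {A : Fin m → Matrix (Fin n) (Fin n) ℝ}
    (hA : ∀ i, (A i).IsSymm) (y : Fin m → ℝ) (Z : Matrix (Fin n) (Fin n) ℝ) :
    ((adjA A y)ᵀ * Z).trace = ∑ i, y i * calA A Z i := by
  simp [adjA, transpose_sum, Finset.sum_mul, trace_sum, calA, fun i => (hA i).eq]

lemma trace_conj_transpose {n r : ℕ} {C : Matrix (Fin n) (Fin n) ℝ} (hC : C.IsSymm)
    (V : Matrix (Fin n) (Fin r) ℝ) (R : Matrix (Fin r) (Fin r) ℝ) :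
    (C * (V * Rᵀ * Vᵀ)).trace = (C * (V * R * Vᵀ)).trace := by
  rw [← trace_transpose]
  simp only [transpose_mul, transpose_transpose, hC.eq]
  rw [trace_mul_comm, Matrix.mul_assoc]

/-! ### Positive semidefinite matrices -/

lemma posSemidef_conj {p q : ℕ} {R : Matrix (Fin q) (Fin q) ℝ} (hR : R.PosSemidef)
    (V : Matrix (Fin p) (Fin q) ℝ) : (V * R * Vᵀ).PosSemidef := by
  simpa [conjTranspose_eq_transpose_of_trivial] using hR.mul_mul_conjTranspose_same V

lemma posSemidef_isSymm {k : ℕ} {X : Matrix (Fin k) (Fin k) ℝ} (hX : X.PosSemidef) :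
    X.IsSymm := by
  have h := hX.1
  rwa [IsHermitian, conjTranspose_eq_transpose_of_trivial] at h

/-- The identity is interior to the cone. The shift `∑ᵢⱼ |Mᵢⱼ|` suffices because
`|xᵢ xⱼ| ≤ ‖x‖²`. -/
lemma exists_smul_one_add_posSemidef {k : ℕ} (M : Matrix (Fin k) (Fin k) ℝ) (hM : M.IsSymm) :
    ∃ c : ℝ, 0 ≤ c ∧ (c • (1 : Matrix (Fin k) (Fin k) ℝ) + M).PosSemidef := by
  refine ⟨∑ i, ∑ j, |M i j|, by positivity, ?_⟩
  refine PosSemidef.of_dotProduct_mulVec_nonneg ?_ fun x => ?_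
  · rw [IsHermitian, conjTranspose_eq_transpose_of_trivial]
    simp [hM.eq]
  · have hx : ∀ i, x i ^ 2 ≤ x ⬝ᵥ x := fun i => by
      rw [dotProduct]
      simp only [← sq]
      exact Finset.single_le_sum (f := fun i => x i ^ 2) (fun j _ => sq_nonneg _)
        (Finset.mem_univ i)
    have hxM : x ⬝ᵥ M *ᵥ x = ∑ i, ∑ j, M i j * (x i * x j) := by
      simp only [dotProduct, mulVec, Finset.mul_sum]
      exact Finset.sum_congr rfl fun i _ => Finset.sum_congr rfl fun j _ => by ring
    have key : ∀ i j, 0 ≤ |M i j| * (x ⬝ᵥ x) + M i j * (x i * x j) := fun i j => by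
      have h1 : |x i * x j| ≤ x ⬝ᵥ x := by
        rw [abs_le]
        constructor <;> nlinarith [hx i, hx j, sq_nonneg (x i + x j), sq_nonneg (x i - x j)]
      have h2 : |M i j * (x i * x j)| ≤ |M i j| * (x ⬝ᵥ x) := by
        rw [abs_mul]
        exact mul_le_mul_of_nonneg_left h1 (abs_nonneg _)
      linarith [neg_abs_le (M i j * (x i * x j))]
    have := Finset.sum_nonneg fun i (_ : i ∈ Finset.univ) =>
      Finset.sum_nonneg fun j (_ : j ∈ Finset.univ) => key i j
    simp only [Finset.sum_add_distrib, ← Finset.sum_mul] at this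
    simpa [add_mulVec, smul_mulVec, dotProduct_add, hxM] using this

lemma convex_spectra {n m : ℕ} (A : Fin m → Matrix (Fin n) (Fin n) ℝ) (b : Fin m → ℝ) :
    Convex ℝ (spectra A b) := by
  rintro X ⟨hX, hXb⟩ Y ⟨hY, hYb⟩ s t hs ht hst
  refine ⟨(hX.smul hs).add (hY.smul ht), ?_⟩
  rw [calA_add, calA_smul, calA_smul, hXb, hYb, ← add_smul, hst, one_smul]

/-! ### Slater's condition relative to the minimal face -/

/-- The positive semidefinite matrices dominated, in the Loewner order, by a nonnegative multiple
of an element of `C`. -/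
def dominated {k : ℕ} (C : Set (Matrix (Fin k) (Fin k) ℝ)) : Set (Matrix (Fin k) (Fin k) ℝ) :=
  {Y | Y.PosSemidef ∧ ∃ X ∈ C, ∃ t : ℝ, 0 ≤ t ∧ (t • X - Y).PosSemidef}

lemma isFaceOfCone_dominated {k : ℕ} {C : Set (Matrix (Fin k) (Fin k) ℝ)} (hC : Convex ℝ C) :
    IsFaceOfCone (dominated C) {Y | Y.PosSemidef} := by
  have hsmul : ∀ c : ℝ, 0 ≤ c → ∀ x ∈ dominated C, c • x ∈ dominated C := by
    rintro c hc Y ⟨hY, X, hX, t, ht, h⟩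
    refine ⟨hY.smul hc, X, hX, c * t, mul_nonneg hc ht, ?_⟩
    have := h.smul hc
    rwa [smul_sub, smul_smul] at this
  have hadd : ∀ x ∈ dominated C, ∀ y ∈ dominated C, x + y ∈ dominated C := by
    rintro Y ⟨hY, X, hX, t, ht, h⟩ Y' ⟨hY', X', hX', t', ht', h'⟩
    rcases (add_nonneg ht ht').eq_or_lt with h0 | h0
    · obtain rfl : t = 0 := by linarith
      obtain rfl : t' = 0 := by linarith
      refine ⟨hY.add hY', X, hX, 0, le_rfl, ?_⟩
      convert h.add h' using 1
      simp only [zero_smul]; abel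
    · refine ⟨hY.add hY', (t / (t + t')) • X + (t' / (t + t')) • X',
        hC hX hX' (by positivity) (by positivity) (by field_simp), t + t', h0.le, ?_⟩
      convert h.add h' using 1
      rw [smul_add, smul_smul, smul_smul, mul_div_cancel₀ _ h0.ne', mul_div_cancel₀ _ h0.ne']
      abel
  refine ⟨fun Y hY => hY.1, ?_, hsmul, ?_⟩
  · intro x hx y hy s t hs ht _
    exact hadd _ (hsmul s hs x hx) _ (hsmul t ht y hy)
  · rintro x hx y hy ⟨-, X, hX, t, ht, h⟩
    refine ⟨⟨hx, X, hX, t, ht, ?_⟩, ⟨hy, X, hX, t, ht, ?_⟩⟩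
    · convert h.add hy using 1
      abel
    · convert h.add hx using 1
      abel

/-- Slater's condition relative to the minimal face: some `V R Vᵀ` in the spectrahedron has `R`
positive definite, in the quantitative form `t R ⪰ I`. -/
lemma exists_slater {n m r : ℕ} {A : Fin m → Matrix (Fin n) (Fin n) ℝ} {b : Fin m → ℝ}
    {V : Matrix (Fin n) (Fin r) ℝ} (hV : Vᵀ * V = 1)
    (hmin : IsMinFace {Y : Matrix (Fin n) (Fin n) ℝ |
        ∃ R : Matrix (Fin r) (Fin r) ℝ, R.PosSemidef ∧ Y = V * R * Vᵀ}
      {Y : Matrix (Fin n) (Fin n) ℝ | Y.PosSemidef} (spectra A b)) :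
    ∃ R : Matrix (Fin r) (Fin r) ℝ, R.PosSemidef ∧ calA A (V * R * Vᵀ) = b ∧
      ∃ t : ℝ, 0 ≤ t ∧ (t • R - 1).PosSemidef := by
  have hsub : spectra A b ⊆ dominated (spectra A b) := fun X hX =>
    ⟨hX.1, X, hX, 1, zero_le_one, by simpa using PosSemidef.zero⟩
  obtain ⟨-, X, hX, t, ht, h⟩ :=
    hmin.2.2 _ (isFaceOfCone_dominated (convex_spectra A b)) hsub ⟨1, PosSemidef.one, rfl⟩
  obtain ⟨R, hR, rfl⟩ := hmin.2.1 hX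
  refine ⟨R, hR, hX.2, t, ht, ?_⟩
  have h' := posSemidef_conj h Vᵀ
  have hc : ∀ S : Matrix (Fin r) (Fin r) ℝ, Vᵀ * (V * S * Vᵀ) * V = S := fun S => by
    rw [show Vᵀ * (V * S * Vᵀ) * V = (Vᵀ * V) * S * (Vᵀ * V) by simp only [Matrix.mul_assoc],
      hV, Matrix.one_mul, Matrix.mul_one]
  rwa [transpose_transpose, Matrix.mul_sub, Matrix.sub_mul, Matrix.mul_smul, Matrix.smul_mul, hc,
    hc] at h'

/-! ### Lagrange multipliers -/

/-- The cone of feasible directions at `R₀` of the positive semidefinite cone. Membership is tested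
on `R + Rᵀ`, so the cone lives in the space of all matrices and contains all
antisymmetric ones. -/
def feasibleDirections {r : ℕ} (R₀ : Matrix (Fin r) (Fin r) ℝ) :
    PointedCone ℝ (Matrix (Fin r) (Fin r) ℝ) where
  carrier := {R | ∃ t : ℝ, 0 ≤ t ∧ (R + Rᵀ + t • R₀).PosSemidef}
  zero_mem' := ⟨0, le_rfl, by simpa using PosSemidef.zero⟩
  add_mem' := by
    rintro R S ⟨t, ht, h⟩ ⟨s, hs, h'⟩
    refine ⟨t + s, add_nonneg ht hs, ?_⟩
    convert h.add h' using 1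
    rw [transpose_add, add_smul]; abel
  smul_mem' := by
    rintro ⟨c, hc⟩ R ⟨t, ht, h⟩
    refine ⟨c * t, mul_nonneg hc ht, ?_⟩
    have := h.smul hc
    rw [smul_add, smul_add, smul_smul] at this
    exact this

/-- Multipliers for minimising `φ` over `R ⪰ 0`, `L R = L R₀`, at an optimal `R₀` and
under Slater's condition (witnessed by `R₁`). -/
lemma exists_multiplier {m r : ℕ} (L : Fin m → Matrix (Fin r) (Fin r) ℝ →ₗ[ℝ] ℝ)
    (φ : Matrix (Fin r) (Fin r) ℝ →ₗ[ℝ] ℝ) (hL : ∀ i R, L i Rᵀ = L i R) (hφ : ∀ R, φ Rᵀ = φ R)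
    {R₀ R₁ : Matrix (Fin r) (Fin r) ℝ} (h₀ : R₀.PosSemidef) (h₁ : R₁.PosSemidef)
    (h₁₀ : ∀ i, L i R₁ = L i R₀) {t : ℝ} (ht : 0 ≤ t) (hS : (t • R₁ - 1).PosSemidef)
    (hopt : ∀ R : Matrix (Fin r) (Fin r) ℝ, R.PosSemidef → (∀ i, L i R = L i R₀) →
      0 ≤ φ (R - R₀)) :
    ∃ y : Fin m → ℝ, ∀ R : Matrix (Fin r) (Fin r) ℝ, R.PosSemidef →
      0 ≤ φ (R - R₀) - ∑ i, y i * L i (R - R₀) := by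
  let D : Matrix (Fin r) (Fin r) ℝ →ₗ.[ℝ] ℝ :=
    ⟨⨅ i, LinearMap.ker (L i), φ.domRestrict _⟩
  have nonneg : ∀ R : D.domain, (R : Matrix (Fin r) (Fin r) ℝ) ∈ feasibleDirections R₀ →
      0 ≤ D R := by
    rintro ⟨R, hR⟩ ⟨s, hs, h⟩
    change 0 ≤ φ R
    change (R + Rᵀ + s • R₀).PosSemidef at h
    have hR' : ∀ i, L i R = 0 := by simpa [D] using hR
    -- Adding another copy of `R₀` keeps the normalising factor `1 + s` positive.
    have hs1 : (0 : ℝ) < 1 + s := by linarith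
    have hne : (1 + s) ≠ 0 := hs1.ne'
    have hp := hopt ((1 + s)⁻¹ • (R + Rᵀ + s • R₀ + R₀)) ((h.add h₀).smul (by positivity))
      fun i => by
        simp only [map_smul, map_add, hL, hR', smul_eq_mul]
        field_simp
        ring
    have he : φ ((1 + s)⁻¹ • (R + Rᵀ + s • R₀ + R₀) - R₀) = (1 + s)⁻¹ * (2 * φ R) := by
      simp only [map_sub, map_smul, map_add, hφ, smul_eq_mul]
      field_simp
      ring
    rw [he] at hp
    nlinarith [mul_nonneg hs1.le hp, mul_inv_cancel_left₀ hne (2 * φ R)]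
  have dense : ∀ Y, ∃ R : D.domain,
      (R : Matrix (Fin r) (Fin r) ℝ) + Y ∈ feasibleDirections R₀ := by
    intro Y
    obtain ⟨c, hc, hcY⟩ := exists_smul_one_add_posSemidef (Y + Yᵀ) (isSymm_add_transpose_self Y)
    -- Moving from `R₀` towards the Slater point absorbs any symmetric perturbation.
    refine ⟨⟨(c * t / 2) • (R₁ - R₀), ?_⟩, c * t, mul_nonneg hc ht, ?_⟩
    · simp [D, h₁₀]
    · convert hcY.add (hS.smul hc) using 1
      simp only [transpose_add, transpose_smul, transpose_sub, (posSemidef_isSymm h₁).eq,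
        (posSemidef_isSymm h₀).eq]
      module
  obtain ⟨g, hg, hgs⟩ := riesz_extension (feasibleDirections R₀) D nonneg dense
  have hker : ⨅ i, LinearMap.ker (L i) ≤ LinearMap.ker (φ - g) := fun R hR => by
    have := hg ⟨R, hR⟩
    change g R = φ R at this
    simp [this]
  obtain ⟨y, hy⟩ := (Submodule.mem_span_range_iff_exists_fun ℝ).1
    (mem_span_of_iInf_ker_le_ker hker)
  refine ⟨y, fun R hR => ?_⟩
  have h1 : ∑ i, y i * L i (R - R₀) = φ (R - R₀) - g (R - R₀) := by
    have := congrArg (fun l : Matrix (Fin r) (Fin r) ℝ →ₗ[ℝ] ℝ => l (R - R₀)) hy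
    simpa only [LinearMap.sum_apply, LinearMap.smul_apply, LinearMap.sub_apply,
      smul_eq_mul] using this
  have h2 : 0 ≤ g (R - R₀) := by
    refine hgs _ ⟨2, zero_le_two, ?_⟩
    convert hR.add hR using 1
    rw [transpose_sub, (posSemidef_isSymm hR).eq, (posSemidef_isSymm h₀).eq, two_smul]
    abel
  linarith

/-! ### First-order optimality -/

lemma first_order_of_min {k : ℕ} {C : Set (Matrix (Fin k) (Fin k) ℝ)} (hC : Convex ℝ C)
    {W X Y : Matrix (Fin k) (Fin k) ℝ} (hX : X ∈ C) (hY : Y ∈ C)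
    (hmin : ∀ Z ∈ C, frobSq (X - W) ≤ frobSq (Z - W)) :
    0 ≤ ((X - W)ᵀ * (Y - X)).trace := by
  set p := ((X - W)ᵀ * (Y - X)).trace with hp
  have hq := frobSq_nonneg (Y - X)
  set q := frobSq (Y - X) with hq'
  have key : ∀ s : ℝ, 0 ≤ s → s ≤ 1 → 0 ≤ 2 * (s * p) + s ^ 2 * q := fun s hs hs1 => by
    have h := hmin _ (hC hX hY (sub_nonneg.2 hs1) hs (by ring))
    rw [show (1 - s) • X + s • Y - W = (X - W) + s • (Y - X) by module, frobSq_add,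
      frobSq_smul, mul_smul_comm, trace_smul, smul_eq_mul, ← hp, ← hq'] at h
    linarith
  by_contra! hneg
  -- The step `s = -p / (q - p)` lies in `[0, 1]` and makes `2 s p + s² q` negative.
  have hd : 0 < q - p := by linarith
  have h := key (-p / (q - p)) (by apply div_nonneg <;> linarith)
    (by rw [div_le_one hd]; linarith)
  have h2 : 2 * (-p / (q - p) * p) + (-p / (q - p)) ^ 2 * q
      = p ^ 2 * (2 * p - q) / (q - p) ^ 2 := by
    field_simp
    ring
  rw [h2] at h
  have : p ^ 2 * (2 * p - q) / (q - p) ^ 2 < 0 :=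
    div_neg_of_neg_of_pos (mul_neg_of_pos_of_neg (sq_pos_of_neg hneg) (by linarith)) (by positivity)
  linarith

/-- The linear form `R ↦ ⟨C, V R Vᵀ⟩`, for symmetric `C`. -/
def conjForm {n r : ℕ} (V : Matrix (Fin n) (Fin r) ℝ) (C : Matrix (Fin n) (Fin n) ℝ) :
    Matrix (Fin r) (Fin r) ℝ →ₗ[ℝ] ℝ where
  toFun R := (C * (V * R * Vᵀ)).trace
  map_add' R S := by simp [Matrix.mul_add, Matrix.add_mul]
  map_smul' c R := by simp

lemma conjForm_apply {n r : ℕ} (V : Matrix (Fin n) (Fin r) ℝ) (C : Matrix (Fin n) (Fin n) ℝ)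
    (R : Matrix (Fin r) (Fin r) ℝ) : conjForm V C R = (C * (V * R * Vᵀ)).trace := rfl

/-- with `f = {V R Vᵀ : R ⪰ 0}` the minimal face of `Sⁿ₊` containing the
nonempty spectrahedron `F`, `X*` solves the best approximation problem
`min{½‖X − W‖² : X ∈ F}` iff there is `ŷ` with `A(P_f(W + A*ŷ)) = b` and
`X* = P_f(W + A*ŷ)`. -/
theorem stmt5 {n m r : ℕ} (A : Fin m → Matrix (Fin n) (Fin n) ℝ)
    (hA : ∀ i, (A i).IsSymm) (hLI : LinearIndependent ℝ A) (b : Fin m → ℝ)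
    (hFne : (spectra A b).Nonempty)
    (V : Matrix (Fin n) (Fin r) ℝ) (hV : Vᵀ * V = 1)
    (f : Set (Matrix (Fin n) (Fin n) ℝ))
    (hf : f = {Y : Matrix (Fin n) (Fin n) ℝ |
        ∃ R : Matrix (Fin r) (Fin r) ℝ, R.PosSemidef ∧ Y = V * R * Vᵀ})
    (hmin : IsMinFace f {Y : Matrix (Fin n) (Fin n) ℝ | Y.PosSemidef} (spectra A b))
    (W : Matrix (Fin n) (Fin n) ℝ) (hW : W.IsSymm)
    (Xstar : Matrix (Fin n) (Fin n) ℝ) :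
    (Xstar ∈ spectra A b ∧
        ∀ Y ∈ spectra A b, frobSq (Xstar - W) ≤ frobSq (Y - W)) ↔
      ∃ (yhat : Fin m → ℝ) (P : Matrix (Fin n) (Fin n) ℝ),
        IsProjOn f (W + adjA A yhat) P ∧ calA A P = b ∧ Xstar = P := by
  subst hf
  constructor
  · rintro ⟨hX, hXmin⟩
    obtain ⟨R₀, hR₀, rfl⟩ := hmin.2.1 hX
    obtain ⟨R₁, hR₁, hR₁b, t, ht, hS⟩ := exists_slater hV hmin
    have hCs : (V * R₀ * Vᵀ - W).IsSymm := (posSemidef_isSymm hX.1).sub hW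
    have hdiff : ∀ R, V * (R - R₀) * Vᵀ = V * R * Vᵀ - V * R₀ * Vᵀ := fun R => by
      rw [Matrix.mul_sub, Matrix.sub_mul]
    obtain ⟨y, hy⟩ := exists_multiplier (fun i => conjForm V (A i))
      (conjForm V (V * R₀ * Vᵀ - W)) (fun i R => trace_conj_transpose (hA i) V R)
      (fun R => trace_conj_transpose hCs V R) hR₀ hR₁
      (fun i => congrFun (hR₁b.trans hX.2.symm) i) ht hS (fun R hR hRL => by
        have h := first_order_of_min (convex_spectra A b) hX
          ⟨posSemidef_conj hR V, (funext hRL).trans hX.2⟩ hXmin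
        rwa [hCs.eq, ← hdiff] at h)
    refine ⟨y, _, ⟨⟨R₀, hR₀, rfl⟩, ?_⟩, hX.2, rfl⟩
    rintro _ ⟨R, hR, rfl⟩
    have h := hy R hR
    simp only [conjForm_apply, hdiff] at h
    have hadj := trace_adjA_mul hA y (V * R * Vᵀ - V * R₀ * Vᵀ)
    simp only [calA] at hadj
    rw [← hadj] at h
    rw [frobSq_sub_comm, frobSq_sub_comm _ (V * R * Vᵀ),
      show V * R * Vᵀ - (W + adjA A y)
        = (V * R₀ * Vᵀ - (W + adjA A y)) + (V * R * Vᵀ - V * R₀ * Vᵀ) by abel,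
      frobSq_add, show V * R₀ * Vᵀ - (W + adjA A y) = (V * R₀ * Vᵀ - W) - adjA A y by abel,
      transpose_sub, sub_mul, trace_sub, hCs.eq]
    linarith [frobSq_nonneg (V * R * Vᵀ - V * R₀ * Vᵀ)]
  · rintro ⟨y, P, ⟨hPf, hP⟩, hPb, rfl⟩
    refine ⟨⟨hmin.1.1 hPf, hPb⟩, fun Y hY => ?_⟩
    have h := hP Y (hmin.2.1 hY)
    -- Since `P` and `Y` are both feasible, `⟨A* y, Y⟩ = ⟨A* y, P⟩`.
    have hadj : ((adjA A y)ᵀ * Y).trace = ((adjA A y)ᵀ * Xstar).trace := by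
      rw [trace_adjA_mul hA, trace_adjA_mul hA, hY.2, hPb]
    rw [show W + adjA A y - Xstar = adjA A y + (W - Xstar) by abel,
      show W + adjA A y - Y = adjA A y + (W - Y) by abel, frobSq_add, frobSq_add,
      mul_sub, mul_sub, trace_sub, trace_sub, hadj] at h
    rw [frobSq_sub_comm, frobSq_sub_comm Y]
    linarith
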